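/- For all named GS4 derivations P with conclusion ⊢Γ,A∧B, the branch-labeled axiom graph decomposes as ⟨⟨P⟩⟩ = ⟨⟨P⟩⟩↾_{Γ,A} ⊔ ⟨⟨P⟩⟩↾_{Γ,B}. -/

import Mathlib

open scoped Classical

noncomputable section

namespace GS4

/-- Named classical propositional formulas over atoms `α`, with names in `ℕ`. -/
inductive NForm (α : Type) : Type
  | atom : ℕ → α → NForm α
  | or   : NForm α → NForm α → NForm α
  | and  : NForm α → NForm α → NForm α

variable {α : Type}

/-- Name-preserving De Morgan negation, w.r.t. an involution `bar` on atoms. -/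
def negF (bar : α → α) : NForm α → NForm α
  | .atom x a => .atom x (bar a)
  | .or A B => .and (negF bar A) (negF bar B)
  | .and A B => .or (negF bar A) (negF bar B)

/-- The set of names occurring in a named formula. -/
def NForm.names : NForm α → Set ℕ
  | .atom x _ => {x}
  | .or A B => A.names ∪ B.names
  | .and A B => A.names ∪ B.names

/-- A named formula is sharing-free if every name occurs at most once in it. -/
def NForm.sharingFree : NForm α → Prop
  | .atom _ _ => True
  | .or A B => A.sharingFree ∧ B.sharingFree ∧ Disjoint A.names B.names
  | .and A B => A.sharingFree ∧ B.sharingFree ∧ Disjoint A.names B.names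

def NForm.isAtom : NForm α → Prop
  | .atom _ _ => True
  | _ => False

/-- Anonymous formulas (shapes): `A ≡ B` iff their shapes coincide. -/
inductive Shape (α : Type) : Type
  | atom : α → Shape α
  | or   : Shape α → Shape α → Shape α
  | and  : Shape α → Shape α → Shape α

def NForm.shape : NForm α → Shape α
  | .atom _ a => .atom a
  | .or A B => .or A.shape B.shape
  | .and A B => .and A.shape B.shape

/-- `HasAtom A x a`: the atomic formula `x:a` occurs in `A`. -/
def HasAtom : NForm α → ℕ → α → Prop
  | .atom y b, x, a => y = x ∧ b = a
  | .or A B, x, a => HasAtom A x a ∨ HasAtom B x a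
  | .and A B, x, a => HasAtom A x a ∨ HasAtom B x a

/-- Names of a finite set of named formulas. -/
def snames (Γ : Finset (NForm α)) : Set ℕ := ⋃ A ∈ Γ, A.names

/-- A finite set of named formulas is sharing-free if all its elements are
sharing-free with pairwise disjoint name sets. -/
def SFSet (Γ : Finset (NForm α)) : Prop :=
  (∀ A ∈ Γ, A.sharingFree) ∧
  ∀ A ∈ Γ, ∀ B ∈ Γ, A ≠ B → Disjoint A.names B.names

/-- `x:a` occurs in some formula of `Γ` (i.e. `Γ[x] = a` for sharing-free `Γ`). -/
def HasAtomS (Γ : Finset (NForm α)) (x : ℕ) (a : α) : Prop :=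
  ∃ A ∈ Γ, HasAtom A x a

/-- Branch sets of named formulas. -/
def BrF : NForm α → Set (Set ℕ)
  | .atom x _ => {{x}}
  | .or A B => {X | ∃ Y ∈ BrF A, ∃ Z ∈ BrF B, X = Y ∪ Z}
  | .and A B => BrF A ∪ BrF B

/-- Branch sets of sequents (finite sharing-free sets of named formulas). -/
def BrS (Γ : Finset (NForm α)) : Set (Set ℕ) :=
  {X | X ⊆ snames Γ ∧ ∀ A ∈ Γ, X ∩ A.names ∈ BrF A}

/-! ## Branch-labeled name graphs -/

/-- A branch-labeled name graph: vertices and a relation between unordered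
pairs of vertices and branch labels. -/
structure BLGraph : Type where
  verts : Set ℕ
  rel : Sym2 ℕ → Set ℕ → Prop

/-- Well-formedness of a bl-graph: related pairs consist of distinct vertices,
labels are sets of vertices, and each edge is included in its labels. -/
def BLGraph.IsBL (G : BLGraph) : Prop :=
  ∀ e X, G.rel e X → ¬ e.IsDiag ∧ X ⊆ G.verts ∧ ∀ v ∈ e, v ∈ X

def BLGraph.Edges (G : BLGraph) : Set (Sym2 ℕ) := {e | ∃ X, G.rel e X}

def BLGraph.Br (G : BLGraph) : Set (Set ℕ) := {X | ∃ e, G.rel e X}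

def BLGraph.union (G H : BLGraph) : BLGraph :=
  ⟨G.verts ∪ H.verts, fun e X => G.rel e X ∨ H.rel e X⟩

/-- Restriction `G↾_S` of a bl-graph. -/
def BLGraph.restrict (G : BLGraph) (S : Set ℕ) : BLGraph :=
  ⟨G.verts ∩ S, fun e X => G.rel e X ∧ X ⊆ S⟩

/-- The interface-relativized edge-branch relation `e ⊰^I_G X`. -/
def BLGraph.relI (G : BLGraph) (I : Set ℕ) (e : Sym2 ℕ) (X : Set ℕ) : Prop :=
  ∃ Y, G.rel e Y ∧ X = Y \ I

/-- `z 0, …, z (n-1)` is an `X`-labeled alternating path between `G` and `H`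
through the interface `I`. -/
def AltPath (G H : BLGraph) (I X : Set ℕ) (n : ℕ) (z : ℕ → ℕ) : Prop :=
  1 < n ∧
  (∀ i < n, ∀ j < n, z i = z j → i = j) ∧
  (∀ i, 0 < i → i + 1 < n → z i ∈ I) ∧
  ((∀ i, i + 1 < n →
      (Even i → G.relI I s(z i, z (i + 1)) X) ∧ (¬ Even i → H.relI I s(z i, z (i + 1)) X)) ∨
   (∀ i, i + 1 < n →
      (Even i → H.relI I s(z i, z (i + 1)) X) ∧ (¬ Even i → G.relI I s(z i, z (i + 1)) X)))

/-- Composition of bl-graphs over an interface `I`. -/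
def BLGraph.comp (G H : BLGraph) (I : Set ℕ) : BLGraph :=
  ⟨(G.verts ∪ H.verts) \ I,
   fun e X => ∃ n z, AltPath G H I X n z ∧ z 0 ∉ I ∧ z (n - 1) ∉ I ∧
     e = s(z 0, z (n - 1))⟩

/-- The weakening operator on bl-graphs: add vertices `V` and extend every
branch label by a member of `Brs`. -/
def blwk (V : Set ℕ) (Brs : Set (Set ℕ)) (G : BLGraph) : BLGraph :=
  ⟨G.verts ∪ V, fun e X => ∃ Y Z, G.rel e Y ∧ Z ∈ Brs ∧ X = Y ∪ Z⟩

/-- The bl-identity graph `id_{A,C}` on a pair of dual formulas. -/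
def blid : NForm α → NForm α → BLGraph
  | .atom x _, .atom y _ => ⟨{x, y}, fun e X => e = s(x, y) ∧ X = {x, y}⟩
  | .or A1 A2, .and C1 C2 =>
      (blwk A2.names (BrF A2) (blid A1 C1)).union (blwk A1.names (BrF A1) (blid A2 C2))
  | .and A1 A2, .or C1 C2 =>
      (blwk C2.names (BrF C2) (blid A1 C1)).union (blwk C1.names (BrF C1) (blid A2 C2))
  | _, _ => ⟨∅, fun _ _ => False⟩

/-! ## Simple name graphs -/

/-- A simple name graph. -/
structure NGraph : Type where
  verts : Set ℕ
  edges : Set (Sym2 ℕ)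

/-- Subgraph relation `H ⊑ G`. -/
def NGraph.Sub (H G : NGraph) : Prop := H.verts ⊆ G.verts ∧ H.edges ⊆ G.edges

def NGraph.union (G H : NGraph) : NGraph := ⟨G.verts ∪ H.verts, G.edges ∪ H.edges⟩

/-- Induced subgraph `G↾_S`. -/
def NGraph.restrict (G : NGraph) (S : Set ℕ) : NGraph :=
  ⟨G.verts ∩ S, {e ∈ G.edges | ∀ v ∈ e, v ∈ S}⟩

/-- Alternating paths between simple name graphs through an interface. -/
def NAltPath (G H : NGraph) (I : Set ℕ) (n : ℕ) (z : ℕ → ℕ) : Prop :=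
  0 < n ∧
  (∀ i < n, ∀ j < n, z i = z j → i = j) ∧
  (∀ i, 0 < i → i + 1 < n → z i ∈ I) ∧
  ((∀ i, i + 1 < n →
      (Even i → s(z i, z (i + 1)) ∈ G.edges) ∧ (¬ Even i → s(z i, z (i + 1)) ∈ H.edges)) ∨
   (∀ i, i + 1 < n →
      (Even i → s(z i, z (i + 1)) ∈ H.edges) ∧ (¬ Even i → s(z i, z (i + 1)) ∈ G.edges)))

/-- Composition of simple name graphs over an interface. -/
def NGraph.comp (G H : NGraph) (I : Set ℕ) : NGraph :=
  ⟨(G.verts ∪ H.verts) \ I,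
   {e | ∃ x y, x ≠ y ∧ x ∈ (G.verts ∪ H.verts) \ I ∧ y ∈ (G.verts ∪ H.verts) \ I ∧
        e = s(x, y) ∧ ∃ n z, NAltPath G H I n z ∧ z 0 = x ∧ z (n - 1) = y}⟩

/-- The identity graph `Id_{A,C}` on a pair of dual formulas. -/
def idg : NForm α → NForm α → NGraph
  | .atom x _, .atom y _ => ⟨{x, y}, {s(x, y)}⟩
  | .or A1 A2, .and C1 C2 => (idg A1 C1).union (idg A2 C2)
  | .and A1 A2, .or C1 C2 => (idg A1 C1).union (idg A2 C2)
  | _, _ => ⟨∅, ∅⟩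

/-- The edgeless (weakening) graph on the names of `Γ`. -/
def wkg (Γ : Finset (NForm α)) : NGraph := ⟨snames Γ, ∅⟩

/-! ## Named GS4 derivations -/

/-- Named GS4 derivation trees. -/
inductive Deriv (α : Type) : Type
  | ax (Γ : Finset (NForm α)) (A C : NForm α)
  | cut (A : NForm α) (P Q : Deriv α)
  | sup (P Q : Deriv α)
  | orI (A B : NForm α) (P : Deriv α)
  | andI (A B : NForm α) (P Q : Deriv α)

/-- Conclusion of a derivation tree. -/
def concl : Deriv α → Finset (NForm α)
  | .ax Γ A C => insert A (insert C Γ)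
  | .cut A P _ => (concl P).erase A
  | .sup P _ => concl P
  | .orI A B P => insert (NForm.or A B) (((concl P).erase A).erase B)
  | .andI A B P _ => insert (NForm.and A B) ((concl P).erase A)

/-- Well-formedness of derivation trees w.r.t. the atom involution `bar`:
each rule is applied correctly to sharing-free named sequents. -/
def WF (bar : α → α) : Deriv α → Prop
  | .ax Γ A C =>
      A.shape = (negF bar C).shape ∧
      A.sharingFree ∧ C.sharingFree ∧ SFSet Γ ∧
      Disjoint A.names C.names ∧
      Disjoint A.names (snames Γ) ∧ Disjoint C.names (snames Γ)
  | .cut A P Q =>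
      WF bar P ∧ WF bar Q ∧
      ∃ Γ : Finset (NForm α), A ∉ Γ ∧ negF bar A ∉ Γ ∧
        concl P = insert A Γ ∧ concl Q = insert (negF bar A) Γ ∧
        A.sharingFree ∧ SFSet Γ ∧ Disjoint A.names (snames Γ)
  | .sup P Q => WF bar P ∧ WF bar Q ∧ concl P = concl Q
  | .orI A B P =>
      WF bar P ∧
      ∃ Γ : Finset (NForm α), A ∉ Γ ∧ B ∉ Γ ∧ A ≠ B ∧
        concl P = insert A (insert B Γ) ∧
        A.sharingFree ∧ B.sharingFree ∧ SFSet Γ ∧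
        Disjoint A.names B.names ∧
        Disjoint A.names (snames Γ) ∧ Disjoint B.names (snames Γ)
  | .andI A B P Q =>
      WF bar P ∧ WF bar Q ∧
      ∃ Γ : Finset (NForm α), A ∉ Γ ∧ B ∉ Γ ∧
        concl P = insert A Γ ∧ concl Q = insert B Γ ∧
        A.sharingFree ∧ B.sharingFree ∧ SFSet Γ ∧
        Disjoint A.names B.names ∧
        Disjoint A.names (snames Γ) ∧ Disjoint B.names (snames Γ)

/-- A derivation is cut-free if it contains no cut rule. -/
def CutFree : Deriv α → Prop
  | .ax _ _ _ => True
  | .cut _ _ _ => False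
  | .sup P Q => CutFree P ∧ CutFree Q
  | .orI _ _ P => CutFree P
  | .andI _ _ P Q => CutFree P ∧ CutFree Q

/-- The branch-labeled axiom graph `⟨⟨P⟩⟩` of a derivation. -/
def blaxg : Deriv α → BLGraph
  | .ax Γ A C => blwk (snames Γ) (BrS Γ) (blid A C)
  | .cut A P Q => BLGraph.comp (blaxg P) (blaxg Q) A.names
  | .sup P Q => (blaxg P).union (blaxg Q)
  | .orI _ _ P => blaxg P
  | .andI _ _ P Q => (blaxg P).union (blaxg Q)

/-- The (simple) axiom graph `⟦P⟧` of a derivation. -/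
def axg : Deriv α → NGraph
  | .ax Γ A C => (wkg Γ).union (idg A C)
  | .cut A P Q => NGraph.comp (axg P) (axg Q) A.names
  | .sup P Q => (axg P).union (axg Q)
  | .orI _ _ P => axg P
  | .andI _ _ P Q => (axg P).union (axg Q)

/-! ## Inversion and isolation -/

/-- Inversion of a disjunction `D ∨ E` in the conclusion. -/
def inv (D E : NForm α) : Deriv α → Deriv α
  | .ax Γ A C =>
      if A = NForm.or D E then
        match C with
        | .and C1 C2 =>
            .andI C1 C2 (.ax (insert E Γ) D C1) (.ax (insert D Γ) E C2)
        | _ => .ax Γ A C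
      else if C = NForm.or D E then
        match A with
        | .and A1 A2 =>
            .andI A1 A2 (.ax (insert E Γ) A1 D) (.ax (insert D Γ) A2 E)
        | _ => .ax Γ A C
      else
        .ax (insert D (insert E (Γ.erase (NForm.or D E)))) A C
  | .cut A P Q => .cut A (inv D E P) (inv D E Q)
  | .sup P Q => .sup (inv D E P) (inv D E Q)
  | .orI A B P => if A = D ∧ B = E then P else .orI A B (inv D E P)
  | .andI A B P Q => .andI A B (inv D E P) (inv D E Q)

/-- Left inversion of a conjunction `D ∧ E` in the conclusion. -/
def invl (D E : NForm α) : Deriv α → Deriv α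
  | .ax Γ A C =>
      if A = NForm.and D E then
        match C with
        | .or C1 C2 => .orI C1 C2 (.ax (insert C2 Γ) D C1)
        | _ => .ax Γ A C
      else if C = NForm.and D E then
        match A with
        | .or A1 A2 => .orI A1 A2 (.ax (insert A2 Γ) A1 D)
        | _ => .ax Γ A C
      else
        .ax (insert D (Γ.erase (NForm.and D E))) A C
  | .cut A P Q => .cut A (invl D E P) (invl D E Q)
  | .sup P Q => .sup (invl D E P) (invl D E Q)
  | .orI A B P => .orI A B (invl D E P)
  | .andI A B P Q => if A = D ∧ B = E then P else .andI A B (invl D E P) (invl D E Q)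

/-- Right inversion of a conjunction `D ∧ E` in the conclusion. -/
def invr (D E : NForm α) : Deriv α → Deriv α
  | .ax Γ A C =>
      if A = NForm.and D E then
        match C with
        | .or C1 C2 => .orI C1 C2 (.ax (insert C1 Γ) E C2)
        | _ => .ax Γ A C
      else if C = NForm.and D E then
        match A with
        | .or A1 A2 => .orI A1 A2 (.ax (insert A1 Γ) A2 E)
        | _ => .ax Γ A C
      else
        .ax (insert E (Γ.erase (NForm.and D E))) A C
  | .cut A P Q => .cut A (invr D E P) (invr D E Q)
  | .sup P Q => .sup (invr D E P) (invr D E Q)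
  | .orI A B P => .orI A B (invr D E P)
  | .andI A B P Q => if A = D ∧ B = E then Q else .andI A B (invr D E P) (invr D E Q)

/-- Isolation of a non-atomic formula in the conclusion. -/
def isl : NForm α → Deriv α → Deriv α
  | .or A B, P => .orI A B (inv A B P)
  | .and A B, P => .andI A B (invl A B P) (invr A B P)
  | .atom _ _, P => P

/-- Totality of a bl-graph w.r.t. a sharing-free named sequent. -/
def Total (bar : α → α) (G : BLGraph) (Γ : Finset (NForm α)) : Prop :=
  G.verts = snames Γ ∧
  G.Br = BrS Γ ∧
  ∀ x y : ℕ, s(x, y) ∈ G.Edges →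
    ∀ a b : α, HasAtomS Γ x a → HasAtomS Γ y b → a = bar b

end GS4

/-!
For disjoint names, the branches of `A, Γ` are the unions of a branch of `A` and a branch of `Γ`,
so that `Br(A ∨ B, Γ) = Br(A, B, Γ)` and `Br(A ∧ B, Γ) = Br(A, Γ) ∪ Br(B, Γ)`, while removing the
names of `A` from a branch of `A, Γ` leaves a branch of `Γ`. By induction on the derivation, every
label of `⟨⟨P⟩⟩` is therefore a branch of the conclusion of `P`. A branch of `Γ, A ∧ B` restricts
on `A ∧ B` to a branch of `A` or to one of `B`, so it avoids the names of the other conjunct and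
survives in one of the two restrictions.
-/

namespace GS4

open scoped SetFamily

variable {α : Type} {bar : α → α} {A B C : NForm α} {Γ Δ : Finset (NForm α)} {G H : BLGraph}

theorem names_negF (bar : α → α) (A : NForm α) : (negF bar A).names = A.names := by
  induction A <;> simp_all [negF, NForm.names]

theorem snames_insert (A : NForm α) (Γ : Finset (NForm α)) :
    snames (insert A Γ) = A.names ∪ snames Γ := by
  simp [snames]

theorem names_subset_snames (hA : A ∈ Γ) : A.names ⊆ snames Γ :=
  Set.subset_biUnion_of_mem (u := NForm.names) hA

theorem disjoint_snames_insert {V : Set ℕ} :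
    Disjoint V (snames (insert A Γ)) ↔ Disjoint V A.names ∧ Disjoint V (snames Γ) := by
  rw [snames_insert, Set.disjoint_union_right]

theorem BrF_or (A B : NForm α) : BrF (A.or B) = BrF A ⊻ BrF B := by
  ext X
  simp only [BrF, Set.mem_sups, Set.mem_ofPred_eq, Set.sup_eq_union, eq_comm]

theorem BrF_and (A B : NForm α) : BrF (A.and B) = BrF A ∪ BrF B := rfl

theorem subset_names_of_mem_BrF {X : Set ℕ} (hX : X ∈ BrF A) : X ⊆ A.names := by
  induction A generalizing X with
  | atom x a => exact hX.subset
  | or A B ihA ihB =>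
    obtain ⟨Y, hY, Z, hZ, rfl⟩ := hX
    exact Set.union_subset_union (ihA hY) (ihB hZ)
  | and A B ihA ihB =>
    rcases hX with hX | hX
    · exact (ihA hX).trans Set.subset_union_left
    · exact (ihB hX).trans Set.subset_union_right

theorem mem_BrS_insert {X : Set ℕ} :
    X ∈ BrS (insert A Γ) ↔
      X ⊆ A.names ∪ snames Γ ∧ X ∩ A.names ∈ BrF A ∧ ∀ D ∈ Γ, X ∩ D.names ∈ BrF D := by
  simp only [BrS, Set.mem_ofPred_eq, snames_insert, Finset.forall_mem_insert]

theorem union_mem_BrS_insert {U X : Set ℕ} (hd : Disjoint A.names (snames Γ)) (hU : U ∈ BrF A)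
    (hX : X ∈ BrS Γ) : U ∪ X ∈ BrS (insert A Γ) := by
  have hUA := subset_names_of_mem_BrF hU
  refine mem_BrS_insert.2 ⟨Set.union_subset_union hUA hX.1, ?_, fun D hD => ?_⟩
  · rwa [Set.union_inter_distrib_right, (hd.symm.mono_left hX.1).inter_eq, Set.union_empty,
      Set.inter_eq_left.2 hUA]
  · rw [Set.union_inter_distrib_right, (hd.mono hUA (names_subset_snames hD)).inter_eq,
      Set.empty_union]
    exact hX.2 D hD

theorem diff_names_mem_BrS {X : Set ℕ} (hd : Disjoint A.names (snames Γ))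
    (hX : X ∈ BrS (insert A Γ)) : X \ A.names ∈ BrS Γ := by
  obtain ⟨hs, -, hΓ⟩ := mem_BrS_insert.1 hX
  refine ⟨Set.sdiff_subset_iff.2 hs, fun D hD => ?_⟩
  have hDA : Disjoint D.names A.names := (hd.mono_right (names_subset_snames hD)).symm
  rw [← Set.inter_sdiff_right_comm, (hDA.mono_left Set.inter_subset_right).sdiff_eq_left]
  exact hΓ D hD

theorem BrS_insert (hd : Disjoint A.names (snames Γ)) : BrS (insert A Γ) = BrF A ⊻ BrS Γ := by
  refine Set.Subset.antisymm (fun X hX => ?_) ?_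
  · exact ⟨_, (mem_BrS_insert.1 hX).2.1, _, diff_names_mem_BrS hd hX, Set.inter_union_sdiff ..⟩
  · exact Set.sups_subset_iff.2 fun U hU X hX => union_mem_BrS_insert hd hU hX

theorem BrS_insert_or (hAB : Disjoint A.names B.names) (hA : Disjoint A.names (snames Γ))
    (hB : Disjoint B.names (snames Γ)) :
    BrS (insert (A.or B) Γ) = BrS (insert A (insert B Γ)) := by
  have hABΓ : Disjoint A.names (snames (insert B Γ)) := disjoint_snames_insert.2 ⟨hAB, hA⟩
  have hor : Disjoint (A.or B).names (snames Γ) := hA.union_left hB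
  rw [BrS_insert hor, BrS_insert hABΓ, BrS_insert hB, BrF_or, Set.sups_assoc]

theorem BrS_insert_and (hA : Disjoint A.names (snames Γ)) (hB : Disjoint B.names (snames Γ)) :
    BrS (insert (A.and B) Γ) = BrS (insert A Γ) ∪ BrS (insert B Γ) := by
  have hand : Disjoint (A.and B).names (snames Γ) := hA.union_left hB
  rw [BrS_insert hand, BrS_insert hA, BrS_insert hB, BrF_and, Set.sups_union_left]

theorem subset_or_subset_of_mem_BrS_insert_and {X : Set ℕ} (hX : X ∈ BrS (insert (A.and B) Γ)) :
    X ⊆ snames Γ ∪ A.names ∨ X ⊆ snames Γ ∪ B.names := by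
  obtain ⟨hs, hAB, -⟩ := mem_BrS_insert.1 hX
  have hXΓ {D : NForm α} (h : X ∩ (A.and B).names ⊆ D.names) : X ⊆ snames Γ ∪ D.names := by
    grind
  exact hAB.imp (hXΓ <| subset_names_of_mem_BrF ·) (hXΓ <| subset_names_of_mem_BrF ·)

theorem BLGraph.br_union (G H : BLGraph) : (G.union H).Br = G.Br ∪ H.Br := by
  ext X
  simp only [BLGraph.Br, BLGraph.union, Set.mem_union, Set.mem_ofPred_eq, exists_or]

theorem br_blwk (V : Set ℕ) (𝓑 : Set (Set ℕ)) (G : BLGraph) : (blwk V 𝓑 G).Br = G.Br ⊻ 𝓑 := by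
  ext X
  constructor
  · rintro ⟨e, Y, Z, hY, hZ, rfl⟩
    exact ⟨Y, ⟨e, hY⟩, Z, hZ, rfl⟩
  · rintro ⟨Y, ⟨e, hY⟩, Z, hZ, rfl⟩
    exact ⟨e, Y, Z, hY, hZ, rfl⟩

theorem BLGraph.br_comp_subset (G H : BLGraph) (I : Set ℕ) :
    (G.comp H I).Br ⊆ (· \ I) '' (G.Br ∪ H.Br) := by
  rintro X ⟨-, n, z, ⟨hn, -, -, hz | hz⟩, -⟩ <;>
    obtain ⟨Y, hY, rfl⟩ := (hz 0 hn).1 Even.zero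
  · exact ⟨Y, Or.inl ⟨_, hY⟩, rfl⟩
  · exact ⟨Y, Or.inr ⟨_, hY⟩, rfl⟩

theorem BLGraph.eq_union_restrict {S T : Set ℕ} (hV : G.verts ⊆ S ∪ T)
    (hBr : ∀ X ∈ G.Br, X ⊆ S ∨ X ⊆ T) : G = (G.restrict S).union (G.restrict T) := by
  obtain ⟨V, r⟩ := G
  simp only [BLGraph.union, BLGraph.restrict, BLGraph.mk.injEq]
  refine ⟨by rw [← Set.inter_union_distrib_left, Set.inter_eq_left.2 hV], ?_⟩
  funext e X
  rw [← and_or_left, eq_iff_iff, iff_self_and]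
  exact fun h => hBr X ⟨e, h⟩

theorem verts_blid_subset (A C : NForm α) : (blid A C).verts ⊆ A.names ∪ C.names := by
  induction A generalizing C with
  | atom x a => cases C <;> simp [blid, NForm.names, Set.insert_subset_iff]
  | or A₁ A₂ ih₁ ih₂ | and A₁ A₂ ih₁ ih₂ =>
    cases C with
    | atom => simp [blid]
    | or C₁ C₂ | and C₁ C₂ =>
      have h₁ := ih₁ C₁
      have h₂ := ih₂ C₂
      simp only [blid, blwk, BLGraph.union, NForm.names]
      grind

theorem br_blid_subset (A C : NForm α) : (blid A C).Br ⊆ BrF A ⊻ BrF C := by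
  induction A generalizing C with
  | atom x a =>
    cases C with
    | atom y b =>
      rintro _ ⟨e, rfl, rfl⟩
      exact ⟨{x}, rfl, {y}, rfl, rfl⟩
    | or | and => rintro X ⟨e, ⟨⟩⟩
  | or A₁ A₂ ih₁ ih₂ =>
    cases C with
    | atom | or => rintro X ⟨e, ⟨⟩⟩
    | and C₁ C₂ =>
      rw [blid, BLGraph.br_union, br_blwk, br_blwk, BrF_or, BrF_and, Set.sups_union_right]
      refine Set.union_subset_union ?_ ?_
      · rw [Set.sups_right_comm]
        exact Set.sups_subset_right (ih₁ C₁)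
      · rw [Set.sups_comm (BrF A₁), Set.sups_right_comm]
        exact Set.sups_subset_right (ih₂ C₂)
  | and A₁ A₂ ih₁ ih₂ =>
    cases C with
    | atom | and => rintro X ⟨e, ⟨⟩⟩
    | or C₁ C₂ =>
      rw [blid, BLGraph.br_union, br_blwk, br_blwk, BrF_or, BrF_and, Set.sups_union_left]
      refine Set.union_subset_union ?_ ?_
      · rw [← Set.sups_assoc]
        exact Set.sups_subset_right (ih₁ C₁)
      · rw [Set.sups_comm (BrF C₁), ← Set.sups_assoc]
        exact Set.sups_subset_right (ih₂ C₂)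

/-- A bl-graph is *over* the sequent `Γ` if its vertices are names of `Γ` and its labels are
branches of `Γ`. This is the part of totality (`Total`) that the decomposition depends on, with
inclusions in place of equalities. -/
structure BLGraph.IsOver (G : BLGraph) (Γ : Finset (NForm α)) : Prop where
  verts_subset : G.verts ⊆ snames Γ
  br_subset : G.Br ⊆ BrS Γ

namespace BLGraph.IsOver

theorem mono (hG : G.IsOver Γ) (hs : snames Γ ⊆ snames Δ) (hBr : BrS Γ ⊆ BrS Δ) : G.IsOver Δ :=
  ⟨hG.verts_subset.trans hs, hG.br_subset.trans hBr⟩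

theorem union (hG : G.IsOver Γ) (hH : H.IsOver Γ) : (G.union H).IsOver Γ where
  verts_subset := Set.union_subset hG.verts_subset hH.verts_subset
  br_subset := (br_union G H).trans_subset (Set.union_subset hG.br_subset hH.br_subset)

theorem comp (hG : G.IsOver (insert A Γ)) (hH : H.IsOver (insert B Γ)) (hBA : B.names = A.names)
    (hd : Disjoint A.names (snames Γ)) : (G.comp H A.names).IsOver Γ where
  verts_subset := by
    have hGV := hG.verts_subset
    have hHV := hH.verts_subset
    rw [snames_insert] at hGV hHV
    exact Set.sdiff_subset_iff.2 (Set.union_subset hGV (hBA ▸ hHV))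
  br_subset := by
    refine (br_comp_subset G H A.names).trans (Set.image_subset_iff.2 (Set.union_subset ?_ ?_))
    · exact fun Y hY => diff_names_mem_BrS hd (hG.br_subset hY)
    · rw [← hBA] at hd ⊢
      exact fun Y hY => diff_names_mem_BrS hd (hH.br_subset hY)

theorem insert_or (hG : G.IsOver (insert A (insert B Γ))) (hAB : Disjoint A.names B.names)
    (hA : Disjoint A.names (snames Γ)) (hB : Disjoint B.names (snames Γ)) :
    G.IsOver (insert (A.or B) Γ) :=
  hG.mono (by simp only [snames_insert, NForm.names, Set.union_assoc, subset_rfl])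
    (BrS_insert_or hAB hA hB).superset

theorem union_insert_and (hG : G.IsOver (insert A Γ)) (hH : H.IsOver (insert B Γ))
    (hA : Disjoint A.names (snames Γ)) (hB : Disjoint B.names (snames Γ)) :
    (G.union H).IsOver (insert (A.and B) Γ) := by
  have hBr := BrS_insert_and hA hB
  refine (hG.mono ?_ ?_).union (hH.mono ?_ ?_)
  · simp only [snames_insert, NForm.names]
    grind
  · exact hBr ▸ Set.subset_union_left
  · simp only [snames_insert, NForm.names]
    grind
  · exact hBr ▸ Set.subset_union_right

theorem eq_union_restrict (hG : G.IsOver (insert (A.and B) Γ)) :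
    G = (G.restrict (snames Γ ∪ A.names)).union (G.restrict (snames Γ ∪ B.names)) := by
  refine BLGraph.eq_union_restrict ?_ fun X hX =>
    subset_or_subset_of_mem_BrS_insert_and (hG.br_subset hX)
  have hV := hG.verts_subset
  rw [snames_insert, NForm.names] at hV
  grind

end BLGraph.IsOver

theorem isOver_blwk_blid (hAC : Disjoint A.names C.names) (hA : Disjoint A.names (snames Γ))
    (hC : Disjoint C.names (snames Γ)) :
    (blwk (snames Γ) (BrS Γ) (blid A C)).IsOver (insert A (insert C Γ)) where
  verts_subset := by
    rw [snames_insert, snames_insert, ← Set.union_assoc]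
    exact Set.union_subset_union_left _ (verts_blid_subset A C)
  br_subset := by
    have hACΓ : Disjoint A.names (snames (insert C Γ)) := disjoint_snames_insert.2 ⟨hAC, hA⟩
    rw [br_blwk, BrS_insert hACΓ, BrS_insert hC, ← Set.sups_assoc]
    exact Set.sups_subset_right (br_blid_subset A C)

theorem concl_cut {P Q : Deriv α} (hA : A ∉ Γ) (hc : concl P = insert A Γ) :
    concl (.cut A P Q) = Γ := by
  rw [concl, hc, Finset.erase_insert hA]

theorem concl_orI {P : Deriv α} (hA : A ∉ Γ) (hB : B ∉ Γ) (hAB : A ≠ B)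
    (hc : concl P = insert A (insert B Γ)) : concl (.orI A B P) = insert (A.or B) Γ := by
  rw [concl, hc, Finset.erase_insert (by simp [hA, hAB]), Finset.erase_insert hB]

theorem concl_andI {P Q : Deriv α} (hA : A ∉ Γ) (hc : concl P = insert A Γ) :
    concl (.andI A B P Q) = insert (A.and B) Γ := by
  rw [concl, hc, Finset.erase_insert hA]

theorem isOver_blaxg {P : Deriv α} (hP : WF bar P) : (blaxg P).IsOver (concl P) := by
  induction P with
  | ax Γ A C =>
    obtain ⟨-, -, -, -, hAC, hA, hC⟩ := hP
    exact isOver_blwk_blid hAC hA hC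
  | cut A P Q ihP ihQ =>
    obtain ⟨hP, hQ, Γ, hA, -, hcP, hcQ, -, -, hd⟩ := hP
    rw [concl_cut hA hcP]
    exact (hcP ▸ ihP hP).comp (hcQ ▸ ihQ hQ) (names_negF bar A) hd
  | sup P Q ihP ihQ =>
    obtain ⟨hP, hQ, hc⟩ := hP
    exact (ihP hP).union (hc ▸ ihQ hQ)
  | orI A B P ih =>
    obtain ⟨hP, Γ, hA, hB, hne, hc, -, -, -, hAB, hAΓ, hBΓ⟩ := hP
    rw [concl_orI hA hB hne hc]
    exact (hc ▸ ih hP).insert_or hAB hAΓ hBΓ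
  | andI A B P Q ihP ihQ =>
    obtain ⟨hP, hQ, Γ, hA, -, hcP, hcQ, -, -, -, -, hAΓ, hBΓ⟩ := hP
    rw [concl_andI hA hcP]
    exact (hcP ▸ ihP hP).union_insert_and (hcQ ▸ ihQ hQ) hAΓ hBΓ

theorem blaxg_decomposition_general {P : Deriv α} (hP : WF bar P)
    (hc : concl P = insert (A.and B) Γ) :
    blaxg P =
      ((blaxg P).restrict (snames Γ ∪ A.names)).union
        ((blaxg P).restrict (snames Γ ∪ B.names)) := by
  have hover : (blaxg P).IsOver (insert (A.and B) Γ) := hc ▸ isOver_blaxg hP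
  exact hover.eq_union_restrict

end GS4

/-- decomposition of the branch-labeled axiom graph of a
derivation of `⊢Γ, A∧B` as the union of its two restrictions. -/
theorem GS4.blaxg_decomposition {α : Type} (bar : α → α)
    (hbar : Function.Involutive bar) (hfix : ∀ a, bar a ≠ a)
    (P : GS4.Deriv α) (hP : GS4.WF bar P)
    (Γ : Finset (GS4.NForm α)) (A B : GS4.NForm α)
    (hAB : GS4.NForm.and A B ∉ Γ)
    (hc : GS4.concl P = insert (GS4.NForm.and A B) Γ) :
    GS4.blaxg P =
      ((GS4.blaxg P).restrict (GS4.snames Γ ∪ A.names)).union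
        ((GS4.blaxg P).restrict (GS4.snames Γ ∪ B.names)) :=
  GS4.blaxg_decomposition_general hP hc
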